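/- Let ((A_t, B_t, C_t))_{t∈ℕ} be a countable family of triples, where for each t ∈ ℕ there are maps b_t, c_t : ℕ → ℕ such that A_{t,λ} is a quantum channel from λ qubits to b_t(λ) + c_t(λ) qubits, B_{t,λ} is a quantum channel from λ + b_t(λ) qubits to λ qubits, and C_{t,λ} is a quantum channel from c_t(λ) + λ qubits to λ qubits, for every λ ∈ ℕ. Then there exist bit strings x_λ, θ_λ ∈ {0,1}^λ for every λ ∈ ℕ such that for every t ∈ ℕ, the function λ ↦ (⟨x_λ| ⊗ ⟨x_λ|) (B_{t,λ} ⊗ C_{t,λ})(|θ_λ⟩⟨θ_λ| ⊗ A_{t,λ}(|x_λ^{θ_λ}⟩⟨x_λ^{θ_λ}|) ⊗ |θ_λ⟩⟨θ_λ|) (|x_λ⟩ ⊗ |x_λ⟩) is negligible, where B_{t,λ} acts on the first copy of |θ_λ⟩⟨θ_λ| together with the first b_t(λ) qubits of A_{t,λ}'s output, and C_{t,λ} acts on the remaining c_t(λ) qubits together with the second copy of |θ_λ⟩⟨θ_λ|. -/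

import Mathlib

open scoped Matrix

/-- A function `f : ℕ → ℝ` is negligible if for every `c`, `f n ≤ n⁻ᶜ` for all
sufficiently large `n`. -/
def Negligible (f : ℕ → ℝ) : Prop :=
  ∀ c : ℕ, ∃ N : ℕ, ∀ n ≥ N, f n ≤ 1 / (n : ℝ) ^ c

/-- The amplitude of the single-qubit state `H^θᵢ |xᵢ⟩` at the basis state `|sᵢ⟩`. -/
noncomputable def qAmp (xi θi si : Bool) : ℂ :=
  if θi then ((1 / Real.sqrt 2 : ℝ) : ℂ) * (if xi && si then -1 else 1)
  else if si = xi then 1 else 0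

/-- The Wiesner state `|x^θ⟩ = H^{θ₁}|x₁⟩ ⊗ ⋯ ⊗ H^{θₙ}|xₙ⟩` as a vector indexed by
computational basis strings. -/
noncomputable def wiesnerVec {n : ℕ} (x θ : Fin n → Bool) : (Fin n → Bool) → ℂ :=
  fun s => ∏ i : Fin n, qAmp (x i) (θ i) (s i)

/-- The density matrix `|x^θ⟩⟨x^θ|` of a Wiesner state. -/
noncomputable def wiesnerDM {n : ℕ} (x θ : Fin n → Bool) :
    Matrix (Fin n → Bool) (Fin n → Bool) ℂ :=
  fun s s' => wiesnerVec x θ s * star (wiesnerVec x θ s')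

/-- The winning probability, in the monogamy-of-entanglement game, of the
adversaries given by Kraus families `KA` (splitting channel, `n → aB + aC` qubits),
`KB` (`n + aB → n` qubits) and `KC` (`aC + n → n` qubits), on the Wiesner state
`|x^θ⟩`: the probability `⟨x,x| (B ⊗ C)(|θ⟩⟨θ| ⊗ A(|x^θ⟩⟨x^θ|) ⊗ |θ⟩⟨θ|) |x,x⟩`
that both `B` and `C`, each given `θ` alongside their share of `A`'s output,
output `x`. -/
noncomputable def moeProb {n aB aC mA mB mC : ℕ}
    (KA : Fin mA → Matrix (Fin (aB + aC) → Bool) (Fin n → Bool) ℂ)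
    (KB : Fin mB → Matrix (Fin n → Bool) (Fin (n + aB) → Bool) ℂ)
    (KC : Fin mC → Matrix (Fin n → Bool) (Fin (aC + n) → Bool) ℂ)
    (x θ : Fin n → Bool) : ℝ :=
  let σ : Matrix (Fin (aB + aC) → Bool) (Fin (aB + aC) → Bool) ℂ :=
    ∑ i, KA i * wiesnerDM x θ * (KA i)ᴴ
  let ρmid : Matrix (Fin (n + aB + (aC + n)) → Bool) (Fin (n + aB + (aC + n)) → Bool) ℂ :=
    fun s s' =>
      (if (fun i : Fin n => s ⟨i.val, by have := i.isLt; omega⟩) = θ then 1 else 0) *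
      (if (fun i : Fin n => s' ⟨i.val, by have := i.isLt; omega⟩) = θ then 1 else 0) *
      σ (fun i : Fin (aB + aC) => s ⟨n + i.val, by have := i.isLt; omega⟩)
        (fun i : Fin (aB + aC) => s' ⟨n + i.val, by have := i.isLt; omega⟩) *
      (if (fun i : Fin n => s ⟨n + aB + aC + i.val, by have := i.isLt; omega⟩) = θ then 1 else 0) *
      (if (fun i : Fin n => s' ⟨n + aB + aC + i.val, by have := i.isLt; omega⟩) = θ then 1 else 0)
  let KBC : Fin mB × Fin mC →
      Matrix (Fin (n + n) → Bool) (Fin (n + aB + (aC + n)) → Bool) ℂ :=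
    fun p r col =>
      KB p.1 (fun i => r ⟨i.val, by have := i.isLt; omega⟩)
        (fun j => col ⟨j.val, by have := j.isLt; omega⟩) *
      KC p.2 (fun i => r ⟨n + i.val, by have := i.isLt; omega⟩)
        (fun j => col ⟨n + aB + j.val, by have := j.isLt; omega⟩)
  let τ : Matrix (Fin (n + n) → Bool) (Fin (n + n) → Bool) ℂ :=
    ∑ p : Fin mB × Fin mC, KBC p * ρmid * (KBC p)ᴴ
  let xx : Fin (n + n) → Bool := fun i =>
    if h : i.val < n then x ⟨i.val, h⟩ else x ⟨i.val - n, by have := i.isLt; omega⟩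
  (τ xx xx).re

/-!
Vectorize the Kraus operators of `A`. Since the Wiesner projections are symmetric matrices, the
winning probability summed over `x` and `θ` is the quadratic form at these vectors of the operator
`∑ θ, Π θ`, where `Π θ = ∑ x, |x^θ⟩⟨x^θ| ⊗ P θ x ⊗ Q θ x` and `P`, `Q` are the POVMs that `B`, `C`
induce on their shares. By the C⋆-identity, `‖∑ θ, Π θ‖ ^ 2 ≤ ∑ θ θ', ‖Π θ * Π θ'‖`, and by the
Cauchy–Schwarz inequality `‖Π θ * Π θ'‖` is at most the largest overlap of the two Wiesner bases,
`2 ^ (-h / 2)` at Hamming distance `h`. Hence the average winning probability is at most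
`(√(2 + √2) / 2) ^ n`. An averaging argument at each `n`, applied to the first `n + 1` triples
simultaneously, then fixes `x` and `θ`.
-/

section Negligible

open Filter

theorem Negligible.of_eventually_le {f g : ℕ → ℝ} (hg : Negligible g)
    (hfg : ∀ᶠ n in atTop, f n ≤ g n) : Negligible f := by
  intro c
  obtain ⟨N, hN⟩ := hg c
  exact eventually_atTop.1 ((hfg.and (eventually_ge_atTop N)).mono fun n hn =>
    hn.1.trans (hN n hn.2))

theorem Negligible.add_one_mul {f : ℕ → ℝ} (hf : Negligible f) :
    Negligible fun n => (n + 1) * f n := by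
  intro c
  obtain ⟨N, hN⟩ := hf (c + 2)
  refine ⟨max N 2, fun n hn => ?_⟩
  have two_le : (2 : ℝ) ≤ n := by exact_mod_cast (le_max_right N 2).trans hn
  have add_one_le_sq : (n : ℝ) + 1 ≤ n ^ 2 := by nlinarith
  calc ((n : ℝ) + 1) * f n ≤ (n + 1) * (1 / n ^ (c + 2)) := by
        gcongr
        exact hN n ((le_max_left N 2).trans hn)
    _ ≤ n ^ 2 * (1 / n ^ (c + 2)) := by gcongr
    _ = 1 / n ^ c := by
        have : (n : ℝ) ≠ 0 := by positivity
        field_simp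
        ring

theorem negligible_pow {r : ℝ} (hr₀ : 0 ≤ r) (hr₁ : r < 1) : Negligible fun n => r ^ n := by
  intro c
  have tendsto_zero := tendsto_pow_const_mul_const_pow_of_lt_one c hr₀ hr₁
  refine eventually_atTop.1 ?_
  filter_upwards [tendsto_zero.eventually_le_const one_pos, eventually_gt_atTop 0] with n hn hn₀
  have : (0 : ℝ) < n := by exact_mod_cast hn₀
  rwa [le_div_iff₀' (by positivity)]

/-- At size `n`, averaging the sum of the first `n + 1` members of the family yields one point that
is good for all of them at once; every fixed member is eventually among those. -/
theorem exists_forall_negligible_of_sum_le {Z : ℕ → Type*} [∀ n, Fintype (Z n)]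
    [∀ n, Nonempty (Z n)] {p : ℕ → ∀ n, Z n → ℝ} (hp : ∀ t n z, 0 ≤ p t n z) {ε : ℕ → ℝ}
    (hε : Negligible ε) (hpε : ∀ t n, ∑ z, p t n z ≤ Fintype.card (Z n) * ε n) :
    ∃ z : ∀ n, Z n, ∀ t, Negligible fun n => p t n (z n) := by
  have exists_good (n : ℕ) : ∃ z, ∑ t ∈ Finset.range (n + 1), p t n z ≤ (n + 1) * ε n := by
    suffices sum_le : ∑ z, ∑ t ∈ Finset.range (n + 1), p t n z ≤ ∑ _z : Z n, (n + 1) * ε n by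
      obtain ⟨z, -, hz⟩ := Finset.exists_le_of_sum_le Finset.univ_nonempty sum_le
      exact ⟨z, hz⟩
    calc ∑ z, ∑ t ∈ Finset.range (n + 1), p t n z
        = ∑ t ∈ Finset.range (n + 1), ∑ z, p t n z := Finset.sum_comm
      _ ≤ ∑ _t ∈ Finset.range (n + 1), Fintype.card (Z n) * ε n :=
          Finset.sum_le_sum fun t _ => hpε t n
      _ = ∑ _z : Z n, (n + 1) * ε n := by simp; ring
  choose z hz using exists_good
  refine ⟨z, fun t => hε.add_one_mul.of_eventually_le ?_⟩
  filter_upwards [eventually_ge_atTop t] with n hn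
  exact (Finset.single_le_sum (f := fun t => p t n (z n)) (fun t _ => hp t n _)
    (Finset.mem_range.2 (Nat.lt_succ_of_le hn))).trans (hz n)

end Negligible

section Measurements

variable {X Y A B : Type*} [Fintype X] [Fintype Y]

/-- A positive operator-valued measure with outcomes in `X`, as a family of elements of an ordered
ring. -/
structure IsPOVM [Semiring A] [PartialOrder A] (P : X → A) : Prop where
  nonneg : ∀ x, 0 ≤ P x
  sum_eq_one : ∑ x, P x = 1

/-- A projection-valued measure with outcomes in `X`, as a family of elements of a star ring. -/
structure IsPVM [Semiring A] [StarRing A] (E : X → A) : Prop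
    extends CompleteOrthogonalIdempotents E where
  isSelfAdjoint : ∀ x, IsSelfAdjoint (E x)

theorem IsPOVM.le_one [Semiring A] [PartialOrder A] [IsOrderedAddMonoid A] {P : X → A}
    (hP : IsPOVM P) (x : X) : P x ≤ 1 :=
  hP.sum_eq_one ▸ Finset.single_le_sum (fun y _ => hP.nonneg y) (Finset.mem_univ x)

theorem IsPVM.isStarProjection [Semiring A] [StarRing A] {E : X → A} (hE : IsPVM E) (x : X) :
    IsStarProjection (E x) :=
  ⟨hE.idem x, hE.isSelfAdjoint x⟩

theorem IsPVM.map [Semiring A] [StarRing A] [Algebra ℂ A] [Semiring B] [StarRing B] [Algebra ℂ B]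
    {E : X → A} (hE : IsPVM E) (φ : A →⋆ₐ[ℂ] B) : IsPVM fun x => φ (E x) :=
  ⟨hE.toCompleteOrthogonalIdempotents.map (φ : A →+* B), fun x => (hE.isSelfAdjoint x).map φ⟩

theorem IsPOVM.map [Ring A] [PartialOrder A] [StarRing A] [StarOrderedRing A] [Algebra ℂ A]
    [Ring B] [PartialOrder B] [StarRing B] [StarOrderedRing B] [Algebra ℂ B] {P : X → A}
    (hP : IsPOVM P) (φ : A →⋆ₐ[ℂ] B) : IsPOVM fun x => φ (P x) :=
  ⟨fun x => map_nonneg φ (hP.nonneg x), by rw [← map_sum, hP.sum_eq_one, map_one]⟩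

theorem IsPVM.sum_mul_mul_sum_mul [Semiring A] [StarRing A] {E P Q : X → A} (hE : IsPVM E)
    (hEP : ∀ x y, Commute (E x) (P y)) :
    (∑ x, E x * P x) * ∑ x, E x * Q x = ∑ x, E x * P x * Q x := by
  classical
  rw [Finset.sum_mul_sum]
  refine Finset.sum_congr rfl fun x _ => ?_
  have mul_eq (y : X) : E x * P x * (E y * Q y) = if x = y then E x * P x * Q x else 0 := by
    rw [(hEP x x).eq, mul_assoc, ← mul_assoc (E x), hE.mul_eq]
    split_ifs with hxy <;> simp [hxy, mul_assoc]
  simp only [mul_eq, Finset.sum_ite_eq, Finset.mem_univ, if_true]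

section CStarAlgebra

variable [CStarAlgebra A]

theorem sq_norm_sum_le_sum_norm_mul {T : X → A} (hT : ∀ x, IsSelfAdjoint (T x)) :
    ‖∑ x, T x‖ ^ 2 ≤ ∑ x, ∑ y, ‖T x * T y‖ := by
  have sum_isSelfAdjoint : star (∑ x, T x) = ∑ x, T x := by
    rw [star_sum]
    exact Finset.sum_congr rfl fun x _ => hT x
  rw [sq, ← CStarRing.norm_star_mul_self, sum_isSelfAdjoint, Finset.sum_mul_sum]
  exact (norm_sum_le _ _).trans (Finset.sum_le_sum fun x _ => norm_sum_le _ _)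

theorem norm_mul_le_of_mul_mul_eq_smul {p q : A} (hp : IsStarProjection p)
    (hq : IsStarProjection q) {c : ℂ} (h : p * q * p = (c * star c) • p) : ‖p * q‖ ≤ ‖c‖ := by
  have mul_star_eq : (p * q) * star (p * q) = (c * star c) • p := by
    rw [star_mul, hp.isSelfAdjoint, hq.isSelfAdjoint, ← h, mul_assoc, ← mul_assoc q,
      hq.isIdempotentElem, mul_assoc]
  refine abs_le_of_sq_le_sq' ?_ (norm_nonneg c) |>.2
  calc ‖p * q‖ ^ 2 = ‖c‖ ^ 2 * ‖p‖ := by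
        rw [sq, ← CStarRing.norm_self_mul_star, mul_star_eq, norm_smul, norm_mul, norm_star, sq]
    _ ≤ ‖c‖ ^ 2 := mul_le_of_le_one_right (sq_nonneg _) hp.norm_le

variable [PartialOrder A] [StarOrderedRing A]

theorem IsPVM.mul_nonneg {E P : X → A} (hE : IsPVM E) (hP : IsPOVM P)
    (hEP : ∀ x y, Commute (E x) (P y)) (x : X) : 0 ≤ E x * P x :=
  (hEP x x).mul_nonneg (hE.isStarProjection x).nonneg (hP.nonneg x)

theorem IsPVM.norm_sum_mul_le_one {E P : X → A} (hE : IsPVM E) (hP : IsPOVM P)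
    (hEP : ∀ x y, Commute (E x) (P y)) : ‖∑ x, E x * P x‖ ≤ 1 := by
  have mul_le (x : X) : E x * P x ≤ E x := by
    rw [← sub_nonneg, ← mul_one_sub]
    exact ((Commute.one_right _).sub_right (hEP x x)).mul_nonneg (hE.isStarProjection x).nonneg
      (sub_nonneg.2 (hP.le_one x))
  have sum_nonneg : 0 ≤ ∑ x, E x * P x := Finset.sum_nonneg fun x _ => hE.mul_nonneg hP hEP x
  rw [CStarAlgebra.norm_le_one_iff_of_nonneg _ sum_nonneg]
  exact (Finset.sum_le_sum fun x _ => mul_le x).trans_eq hE.complete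

end CStarAlgebra

section Hilbert

variable {H : Type*} [NormedAddCommGroup H] [InnerProductSpace ℂ H] [CompleteSpace H]

open scoped InnerProductSpace

theorem norm_inner_apply_apply_le_of_commute {R T : H →L[ℂ] H} (hR : 0 ≤ R) (hRT : Commute R T)
    (a b : H) :
    ‖⟪a, R (T b)⟫_ℂ‖ ≤ ‖T‖ * (√(⟪a, R a⟫_ℂ).re * √(⟪b, R b⟫_ℂ).re) := by
  set S := CFC.sqrt R
  have sqrt_isSelfAdjoint : IsSelfAdjoint S := (CFC.sqrt_nonneg R).isSelfAdjoint
  have inner_eq (u v : H) : ⟪u, R v⟫_ℂ = ⟪S u, S v⟫_ℂ := by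
    rw [← CFC.sqrt_mul_sqrt_self R, mul_apply_eq_comp,
      ← ContinuousLinearMap.adjoint_inner_left, sqrt_isSelfAdjoint.adjoint_eq]
  have sqrt_re_inner (u : H) : √(⟪u, R u⟫_ℂ).re = ‖S u‖ := by
    rw [inner_eq, inner_self_eq_norm_sq_to_K]
    norm_cast
    exact Real.sqrt_sq (norm_nonneg _)
  have sqrt_commute : S (T b) = T (S b) :=
    DFunLike.congr_fun (hRT.cfcₙ_nnreal NNReal.sqrt).eq b
  rw [inner_eq, sqrt_commute, sqrt_re_inner, sqrt_re_inner]
  calc ‖⟪S a, T (S b)⟫_ℂ‖ ≤ ‖S a‖ * (‖T‖ * ‖S b‖) :=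
        (norm_inner_le_norm _ _).trans (by gcongr; exact T.le_opNorm _)
    _ = ‖T‖ * (‖S a‖ * ‖S b‖) := by ring

theorem sum_sum_re_inner_mul_apply_le {E P : X → H →L[ℂ] H} {Q : Y → H →L[ℂ] H} (hE : IsPVM E)
    (hP : IsPOVM P) (hQ : IsPOVM Q) (hEP : ∀ x y, Commute (E x) (P y)) (a : H) :
    ∑ x, ∑ y, (⟪E x a, (P x * Q y) (E x a)⟫_ℂ).re ≤ ‖a‖ ^ 2 := by
  have inner_eq (x : X) : ∑ y, ⟪E x a, (P x * Q y) (E x a)⟫_ℂ = ⟪a, (E x * P x) a⟫_ℂ := by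
    have conj_eq : E x * (P x * E x) = E x * P x := by
      rw [← (hEP x x).eq, ← mul_assoc, (hE.idem x).eq]
    rw [← inner_sum, ← sum_apply, ← Finset.mul_sum, hQ.sum_eq_one, mul_one,
      ← ContinuousLinearMap.adjoint_inner_right, (hE.isSelfAdjoint x).adjoint_eq, ← conj_eq]
    rfl
  calc ∑ x, ∑ y, (⟪E x a, (P x * Q y) (E x a)⟫_ℂ).re
      = (⟪a, (∑ x, E x * P x) a⟫_ℂ).re := by
        simp only [← Complex.re_sum, inner_eq, sum_apply, inner_sum]
    _ ≤ ‖a‖ * (‖∑ x, E x * P x‖ * ‖a‖) :=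
        (Complex.re_le_norm _).trans ((norm_inner_le_norm _ _).trans
          (by gcongr; exact ContinuousLinearMap.le_opNorm _ _))
    _ ≤ ‖a‖ * (1 * ‖a‖) := by gcongr; exact hE.norm_sum_mul_le_one hP hEP
    _ = ‖a‖ ^ 2 := by ring

end Hilbert

section CommutingStrategy

variable {Θ : Type*}

/-- A commuting-operator strategy for the monogamy-of-entanglement game with questions `θ : Θ` and
answers `x : X`: the referee measures `E θ`, the players `P θ` and `Q θ`, and commutation replaces
the requirement that the three parties act on separate tensor factors. -/
structure IsCommutingStrategy [Semiring A] [PartialOrder A] [StarRing A] (E P Q : Θ → X → A) :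
    Prop where
  isPVM : ∀ θ, IsPVM (E θ)
  isPOVM_left : ∀ θ, IsPOVM (P θ)
  isPOVM_right : ∀ θ, IsPOVM (Q θ)
  commute_left : ∀ θ x θ' y, Commute (E θ x) (P θ' y)
  commute_right : ∀ θ x θ' y, Commute (E θ x) (Q θ' y)
  commute_left_right : ∀ θ x θ' y, Commute (P θ x) (Q θ' y)

namespace IsCommutingStrategy

theorem map [Ring A] [PartialOrder A] [StarRing A] [StarOrderedRing A] [Algebra ℂ A]
    [Ring B] [PartialOrder B] [StarRing B] [StarOrderedRing B] [Algebra ℂ B]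
    {E P Q : Θ → X → A} (hS : IsCommutingStrategy E P Q) (φ : A →⋆ₐ[ℂ] B) :
    IsCommutingStrategy (fun θ x => φ (E θ x)) (fun θ x => φ (P θ x))
      (fun θ x => φ (Q θ x)) where
  isPVM θ := (hS.isPVM θ).map φ
  isPOVM_left θ := (hS.isPOVM_left θ).map φ
  isPOVM_right θ := (hS.isPOVM_right θ).map φ
  commute_left θ x θ' y := (hS.commute_left θ x θ' y).map φ
  commute_right θ x θ' y := (hS.commute_right θ x θ' y).map φ
  commute_left_right θ x θ' y := (hS.commute_left_right θ x θ' y).map φ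

theorem left_mul_right_nonneg [CStarAlgebra A] [PartialOrder A] [StarOrderedRing A]
    {E P Q : Θ → X → A} (hS : IsCommutingStrategy E P Q) (θ θ' : Θ) (x y : X) :
    0 ≤ P θ x * Q θ' y :=
  (hS.commute_left_right θ x θ' y).mul_nonneg ((hS.isPOVM_left θ).nonneg x)
    ((hS.isPOVM_right θ').nonneg y)

theorem isSelfAdjoint_sum [CStarAlgebra A] [PartialOrder A] [StarOrderedRing A]
    {E P Q : Θ → X → A} (hS : IsCommutingStrategy E P Q) (θ : Θ) :
    IsSelfAdjoint (∑ x, E θ x * P θ x * Q θ x) :=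
  IsSelfAdjoint.of_nonneg <| Finset.sum_nonneg fun x _ =>
    ((hS.commute_right θ x θ x).mul_left (hS.commute_left_right θ x θ x)).mul_nonneg
      ((hS.isPVM θ).mul_nonneg (hS.isPOVM_left θ) (fun x y => hS.commute_left θ x θ y) x)
      ((hS.isPOVM_right θ).nonneg x)

variable {H : Type*} [NormedAddCommGroup H] [InnerProductSpace ℂ H] [CompleteSpace H]
  {E P Q : Θ → X → H →L[ℂ] H}

open scoped InnerProductSpace

theorem norm_inner_mul_apply_le (hS : IsCommutingStrategy E P Q) (θ θ' : Θ) (x y : X)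
    (a b : H) :
    ‖⟪a, (E θ x * P θ x * (E θ' y * Q θ' y)) b⟫_ℂ‖ ≤ ‖E θ x * E θ' y‖ *
      (√(⟪E θ x a, (P θ x * Q θ' y) (E θ x a)⟫_ℂ).re *
        √(⟪E θ' y b, (P θ x * Q θ' y) (E θ' y b)⟫_ℂ).re) := by
  set R := P θ x * Q θ' y
  have commute_R (φ z) : Commute R (E φ z) :=
    ((hS.commute_left φ z θ x).mul_right (hS.commute_right φ z θ' y)).symm
  have mul_eq : E θ x * P θ x * (E θ' y * Q θ' y) =
      E θ x * (R * (E θ x * E θ' y * E θ' y)) := by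
    calc E θ x * P θ x * (E θ' y * Q θ' y) = E θ x * E θ' y * R := by
          rw [mul_assoc, ← mul_assoc (P θ x), ← (hS.commute_left θ' y θ x).eq]
          simp only [R, mul_assoc]
      _ = E θ x * E θ x * (E θ' y * E θ' y) * R := by
          rw [((hS.isPVM θ).idem x).eq, ((hS.isPVM θ').idem y).eq]
      _ = E θ x * (E θ x * E θ' y * E θ' y * R) := by simp only [mul_assoc]
      _ = E θ x * (R * (E θ x * E θ' y * E θ' y)) := by
          rw [(((commute_R θ x).mul_right (commute_R θ' y)).mul_right (commute_R θ' y)).eq]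
  have inner_eq : ⟪a, (E θ x * P θ x * (E θ' y * Q θ' y)) b⟫_ℂ =
      ⟪E θ x a, R ((E θ x * E θ' y) (E θ' y b))⟫_ℂ := by
    rw [mul_eq, mul_apply_eq_comp, ← ContinuousLinearMap.adjoint_inner_left,
      ((hS.isPVM θ).isSelfAdjoint x).adjoint_eq]
    rfl
  rw [inner_eq]
  exact norm_inner_apply_apply_le_of_commute (hS.left_mul_right_nonneg θ θ' x y)
    ((commute_R θ x).mul_right (commute_R θ' y)) _ _

variable {d : ℝ} {θ θ' : Θ}

theorem norm_inner_sum_mul_mul_sum_mul_apply_le (hS : IsCommutingStrategy E P Q)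
    (hd₀ : 0 ≤ d) (hd : ∀ x y, ‖E θ x * E θ' y‖ ≤ d) (a b : H) :
    ‖⟪a, ((∑ x, E θ x * P θ x) * ∑ y, E θ' y * Q θ' y) b⟫_ℂ‖ ≤ d * (‖a‖ * ‖b‖) := by
  let R (z : X × X) : H →L[ℂ] H := P θ z.1 * Q θ' z.2
  let f (z : X × X) : ℝ := (⟪E θ z.1 a, R z (E θ z.1 a)⟫_ℂ).re
  let g (z : X × X) : ℝ := (⟪E θ' z.2 b, R z (E θ' z.2 b)⟫_ℂ).re
  have re_inner_nonneg (z : X × X) (v : H) : 0 ≤ (⟪v, R z v⟫_ℂ).re :=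
    ((ContinuousLinearMap.nonneg_iff_isPositive _).1
      (hS.left_mul_right_nonneg θ θ' z.1 z.2)).re_inner_nonneg_right v
  have sum_f_le : ∑ z, f z ≤ ‖a‖ ^ 2 := by
    rw [Fintype.sum_prod_type]
    exact sum_sum_re_inner_mul_apply_le (hS.isPVM θ) (hS.isPOVM_left θ) (hS.isPOVM_right θ')
      (fun x y => hS.commute_left θ x θ y) a
  have sum_g_le : ∑ z, g z ≤ ‖b‖ ^ 2 := by
    rw [Fintype.sum_prod_type_right]
    simpa only [g, R, (hS.commute_left_right _ _ _ _).eq] using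
      sum_sum_re_inner_mul_apply_le (hS.isPVM θ') (hS.isPOVM_right θ') (hS.isPOVM_left θ)
        (fun x y => hS.commute_right θ' x θ' y) b
  calc ‖⟪a, ((∑ x, E θ x * P θ x) * ∑ y, E θ' y * Q θ' y) b⟫_ℂ‖
      = ‖∑ z : X × X, ⟪a, (E θ z.1 * P θ z.1 * (E θ' z.2 * Q θ' z.2)) b⟫_ℂ‖ := by
        rw [Finset.sum_mul_sum, ← Fintype.sum_prod_type', sum_apply, inner_sum]
    _ ≤ ∑ z, d * (√(f z) * √(g z)) := norm_sum_le_of_le _ fun z _ =>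
        (hS.norm_inner_mul_apply_le θ θ' z.1 z.2 a b).trans (by gcongr; exact hd _ _)
    _ ≤ d * (√(∑ z, f z) * √(∑ z, g z)) := by
        rw [← Finset.mul_sum]
        gcongr
        exact Real.sum_sqrt_mul_sqrt_le _ (fun z => re_inner_nonneg z _)
          fun z => re_inner_nonneg z _
    _ ≤ d * (‖a‖ * ‖b‖) := by
        gcongr
        · exact (Real.sqrt_le_left (norm_nonneg a)).2 sum_f_le
        · exact (Real.sqrt_le_left (norm_nonneg b)).2 sum_g_le

/-- Writing each sum as `(∑ E Q) (∑ E P)` puts `P θ` next to `Q θ'` in the middle of the product: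
these commute, whereas `P θ` and `P θ'` need not. -/
theorem norm_sum_mul_sum_le (hS : IsCommutingStrategy E P Q) (hd₀ : 0 ≤ d)
    (hd : ∀ x y, ‖E θ x * E θ' y‖ ≤ d) :
    ‖(∑ x, E θ x * P θ x * Q θ x) * ∑ y, E θ' y * P θ' y * Q θ' y‖ ≤ d := by
  have factor (φ : Θ) : ∑ x, E φ x * P φ x * Q φ x =
      (∑ x, E φ x * Q φ x) * ∑ x, E φ x * P φ x := by
    rw [(hS.isPVM φ).sum_mul_mul_sum_mul fun x y => hS.commute_right φ x φ y]
    simp only [mul_assoc, (hS.commute_left_right φ _ φ _).eq]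
  have norm_left_le (φ : Θ) : ‖∑ x, E φ x * P φ x‖ ≤ 1 :=
    (hS.isPVM φ).norm_sum_mul_le_one (hS.isPOVM_left φ) fun x y => hS.commute_left φ x φ y
  have norm_right_le (φ : Θ) : ‖∑ x, E φ x * Q φ x‖ ≤ 1 :=
    (hS.isPVM φ).norm_sum_mul_le_one (hS.isPOVM_right φ) fun x y => hS.commute_right φ x φ y
  have norm_middle_le : ‖(∑ x, E θ x * P θ x) * ∑ y, E θ' y * Q θ' y‖ ≤ d :=
    ContinuousLinearMap.opNorm_le_of_re_inner_le hd₀ fun a b ha hb => by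
      have norm_inner_le := hS.norm_inner_sum_mul_mul_sum_mul_apply_le hd₀ hd b a
      rw [ha, hb, mul_one, mul_one] at norm_inner_le
      rw [inner_re_symm]
      exact (RCLike.re_le_norm _).trans norm_inner_le
  calc ‖(∑ x, E θ x * P θ x * Q θ x) * ∑ y, E θ' y * P θ' y * Q θ' y‖
      = ‖(∑ x, E θ x * Q θ x) * ((∑ x, E θ x * P θ x) * ∑ y, E θ' y * Q θ' y) *
          ∑ y, E θ' y * P θ' y‖ := by
        rw [factor θ, factor θ']
        simp only [mul_assoc]
    _ ≤ 1 * d * 1 := norm_mul_le_of_le (norm_mul_le_of_le (norm_right_le θ) norm_middle_le)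
        (norm_left_le θ')
    _ = d := by ring

theorem sq_norm_sum_sum_le [Fintype Θ] (hS : IsCommutingStrategy E P Q) {d : Θ → Θ → ℝ}
    (hd₀ : ∀ θ θ', 0 ≤ d θ θ') (hd : ∀ θ θ' x y, ‖E θ x * E θ' y‖ ≤ d θ θ') :
    ‖∑ θ, ∑ x, E θ x * P θ x * Q θ x‖ ^ 2 ≤ ∑ θ, ∑ θ', d θ θ' :=
  (sq_norm_sum_le_sum_norm_mul hS.isSelfAdjoint_sum).trans <|
    Finset.sum_le_sum fun θ _ => Finset.sum_le_sum fun θ' _ =>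
      hS.norm_sum_mul_sum_le (hd₀ θ θ') (hd θ θ')

end IsCommutingStrategy

end CommutingStrategy

end Measurements

section Kronecker

open scoped Kronecker ComplexOrder MatrixOrder

variable {Θ X S B C : Type*} [Fintype X] [Fintype S] [Fintype B] [Fintype C]
  [DecidableEq S] [DecidableEq B] [DecidableEq C]

/-- The ampliation `M ↦ M ⊗ 1` of operators on the first of two tensor factors. -/
def kroneckerOne : Matrix S S ℂ →⋆ₐ[ℂ] Matrix (S × B) (S × B) ℂ where
  toFun M := M ⊗ₖ (1 : Matrix B B ℂ)
  map_one' := Matrix.one_kronecker_one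
  map_mul' M N := by rw [← Matrix.mul_kronecker_mul, one_mul]
  map_zero' := Matrix.zero_kronecker _
  map_add' M N := Matrix.add_kronecker M N _
  commutes' c := by
    simp only [Algebra.algebraMap_eq_smul_one, Matrix.smul_kronecker, Matrix.one_kronecker_one]
  map_star' M := by
    simp only [Matrix.star_eq_conjTranspose, Matrix.conjTranspose_kronecker,
      Matrix.conjTranspose_one]

/-- The ampliation `M ↦ 1 ⊗ M` of operators on the second of two tensor factors. -/
def oneKronecker : Matrix B B ℂ →⋆ₐ[ℂ] Matrix (S × B) (S × B) ℂ where
  toFun M := (1 : Matrix S S ℂ) ⊗ₖ M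
  map_one' := Matrix.one_kronecker_one
  map_mul' M N := by rw [← Matrix.mul_kronecker_mul, one_mul]
  map_zero' := Matrix.kronecker_zero _
  map_add' M N := Matrix.kronecker_add _ M N
  commutes' c := by
    simp only [Algebra.algebraMap_eq_smul_one, Matrix.kronecker_smul, Matrix.one_kronecker_one]
  map_star' M := by
    simp only [Matrix.star_eq_conjTranspose, Matrix.conjTranspose_kronecker,
      Matrix.conjTranspose_one]

theorem kroneckerOne_mul_oneKronecker (M : Matrix S S ℂ) (N : Matrix B B ℂ) :
    kroneckerOne M * oneKronecker N = M ⊗ₖ N := by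
  change M ⊗ₖ 1 * (1 ⊗ₖ N) = M ⊗ₖ N
  rw [← Matrix.mul_kronecker_mul, mul_one, one_mul]

theorem commute_kroneckerOne_oneKronecker (M : Matrix S S ℂ) (N : Matrix B B ℂ) :
    Commute (kroneckerOne M) (oneKronecker N) := by
  change M ⊗ₖ 1 * (1 ⊗ₖ N) = (1 ⊗ₖ N) * M ⊗ₖ 1
  simp only [← Matrix.mul_kronecker_mul, mul_one, one_mul]

theorem isCommutingStrategy_kronecker {e : Θ → X → Matrix S S ℂ} {p : Θ → X → Matrix B B ℂ}
    {q : Θ → X → Matrix C C ℂ} (he : ∀ θ, IsPVM (e θ)) (hp : ∀ θ, IsPOVM (p θ))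
    (hq : ∀ θ, IsPOVM (q θ)) :
    IsCommutingStrategy (fun θ x => (kroneckerOne (e θ x) : Matrix (S × B × C) (S × B × C) ℂ))
      (fun θ x => oneKronecker (kroneckerOne (p θ x)))
      (fun θ x => oneKronecker (oneKronecker (q θ x))) where
  isPVM θ := (he θ).map kroneckerOne
  isPOVM_left θ := ((hp θ).map (kroneckerOne (B := C))).map (oneKronecker (S := S))
  isPOVM_right θ := ((hq θ).map (oneKronecker (S := B))).map (oneKronecker (S := S))
  commute_left _ _ _ _ := commute_kroneckerOne_oneKronecker _ _
  commute_right _ _ _ _ := commute_kroneckerOne_oneKronecker _ _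
  commute_left_right _ _ _ _ := (commute_kroneckerOne_oneKronecker _ _).map oneKronecker

theorem re_star_dotProduct_mulVec_le (M : Matrix S S ℂ) (v : S → ℂ) :
    (star v ⬝ᵥ (M *ᵥ v)).re ≤ ‖Matrix.toEuclideanCLM (𝕜 := ℂ) M‖ * (star v ⬝ᵥ v).re := by
  set u : EuclideanSpace ℂ S := WithLp.toLp 2 v
  have inner_eq : inner ℂ u (Matrix.toEuclideanCLM (𝕜 := ℂ) M u) = star v ⬝ᵥ (M *ᵥ v) := by
    rw [EuclideanSpace.inner_eq_star_dotProduct, Matrix.toEuclideanCLM_toLp, dotProduct_comm]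
  have re_self_eq : (star v ⬝ᵥ v).re = ‖u‖ ^ 2 := by
    rw [dotProduct_comm, ← EuclideanSpace.inner_toLp_toLp, inner_self_eq_norm_sq_to_K]
    norm_cast
  rw [← inner_eq, re_self_eq]
  calc (inner ℂ u (Matrix.toEuclideanCLM (𝕜 := ℂ) M u)).re
      ≤ ‖u‖ * ‖Matrix.toEuclideanCLM (𝕜 := ℂ) M u‖ := re_inner_le_norm (𝕜 := ℂ) _ _
    _ ≤ ‖u‖ * (‖Matrix.toEuclideanCLM (𝕜 := ℂ) M‖ * ‖u‖) := by
        gcongr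
        exact ContinuousLinearMap.le_opNorm _ _
    _ = ‖Matrix.toEuclideanCLM (𝕜 := ℂ) M‖ * ‖u‖ ^ 2 := by ring

theorem sum_sum_re_star_dotProduct_kronecker_mulVec_le [Fintype Θ] {e : Θ → X → Matrix S S ℂ}
    {p : Θ → X → Matrix B B ℂ} {q : Θ → X → Matrix C C ℂ} (he : ∀ θ, IsPVM (e θ))
    (hp : ∀ θ, IsPOVM (p θ)) (hq : ∀ θ, IsPOVM (q θ)) {c : Θ → Θ → X → X → ℂ}
    (hc : ∀ θ θ' x y, e θ x * e θ' y * e θ x = (c θ θ' x y * star (c θ θ' x y)) • e θ x)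
    {d : Θ → Θ → ℝ} (hd₀ : ∀ θ θ', 0 ≤ d θ θ') (hd : ∀ θ θ' x y, ‖c θ θ' x y‖ ≤ d θ θ')
    (v : S × B × C → ℂ) :
    ∑ θ, ∑ x, (star v ⬝ᵥ ((e θ x ⊗ₖ (p θ x ⊗ₖ q θ x)) *ᵥ v)).re ≤
      √(∑ θ, ∑ θ', d θ θ') * (star v ⬝ᵥ v).re := by
  let φ := (Matrix.toEuclideanCLM (𝕜 := ℂ) (n := S × B × C)).toStarAlgHom
  have hS := (isCommutingStrategy_kronecker he hp hq).map φ
  have norm_mul_le (θ θ' x y) :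
      ‖φ (kroneckerOne (e θ x)) * φ (kroneckerOne (e θ' y))‖ ≤ d θ θ' := by
    refine (norm_mul_le_of_mul_mul_eq_smul ((hS.isPVM θ).isStarProjection x)
      ((hS.isPVM θ').isStarProjection y) ?_).trans (hd θ θ' x y)
    simp only [← map_mul, hc, map_smul]
  have norm_le := Real.le_sqrt_of_sq_le (hS.sq_norm_sum_sum_le hd₀ norm_mul_le)
  have sum_eq : ∑ θ, ∑ x, φ (kroneckerOne (e θ x)) * φ (oneKronecker (kroneckerOne (p θ x))) *
      φ (oneKronecker (oneKronecker (q θ x))) = φ (∑ θ, ∑ x, e θ x ⊗ₖ (p θ x ⊗ₖ q θ x)) := by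
    simp only [map_sum, ← kroneckerOne_mul_oneKronecker, map_mul, mul_assoc]
  calc ∑ θ, ∑ x, (star v ⬝ᵥ ((e θ x ⊗ₖ (p θ x ⊗ₖ q θ x)) *ᵥ v)).re
      = (star v ⬝ᵥ ((∑ θ, ∑ x, e θ x ⊗ₖ (p θ x ⊗ₖ q θ x)) *ᵥ v)).re := by
        simp only [Matrix.sum_mulVec, dotProduct_sum, Complex.re_sum]
    _ ≤ ‖φ (∑ θ, ∑ x, e θ x ⊗ₖ (p θ x ⊗ₖ q θ x))‖ * (star v ⬝ᵥ v).re :=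
        re_star_dotProduct_mulVec_le _ _
    _ ≤ √(∑ θ, ∑ θ', d θ θ') * (star v ⬝ᵥ v).re := by
        gcongr
        · exact (Complex.nonneg_iff.1 (dotProduct_star_self_nonneg v)).1
        · exact sum_eq ▸ norm_le

end Kronecker

section Kraus

open scoped Kronecker ComplexOrder MatrixOrder

variable {I J X Y D D' : Type*} [Fintype I] [Fintype J]

/-- The POVM element `∑ᵢ Kᵢᴴ |x⟩⟨x| Kᵢ` of the measurement that applies the channel with Kraus
family `K` and reads its output in the computational basis. -/
def effect (K : I → Matrix X D ℂ) (x : X) : Matrix D D ℂ :=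
  ∑ i, Matrix.vecMulVec (star (K i x)) (K i x)

theorem posSemidef_effect [Finite D] (K : I → Matrix X D ℂ) (x : X) : (effect K x).PosSemidef :=
  Matrix.posSemidef_sum _ fun i _ => Matrix.posSemidef_vecMulVec_star_self (K i x)

theorem isPOVM_effect [Fintype X] [Fintype D] [DecidableEq D] {K : I → Matrix X D ℂ}
    (hK : ∑ i, (K i)ᴴ * K i = 1) : IsPOVM (effect K) where
  nonneg x := Matrix.nonneg_iff_posSemidef.2 (posSemidef_effect K x)
  sum_eq_one := by
    rw [← hK, show ∑ x, effect K x = ∑ i, ∑ x, Matrix.vecMulVec (star (K i x)) (K i x) from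
      Finset.sum_comm]
    refine Finset.sum_congr rfl fun i _ => ?_
    ext k l
    simp only [Matrix.sum_apply, Matrix.vecMulVec_apply, Pi.star_apply, Matrix.mul_apply,
      Matrix.conjTranspose_apply]

theorem effect_kronecker (K : I → Matrix X D ℂ) (L : J → Matrix Y D' ℂ) (x : X) (y : Y) :
    effect (fun p : I × J => K p.1 ⊗ₖ L p.2) (x, y) = effect K x ⊗ₖ effect L y := by
  ext ⟨k, k'⟩ ⟨l, l'⟩
  simp only [effect, Matrix.sum_apply, Matrix.vecMulVec_apply, Pi.star_apply,
    Matrix.kroneckerMap_apply, Finset.sum_mul_sum, Fintype.sum_prod_type, star_mul']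
  refine Finset.sum_congr rfl fun i _ => Finset.sum_congr rfl fun j _ => ?_
  ring

theorem trace_effect_mul [Fintype D] (K : I → Matrix X D ℂ) (ρ : Matrix D D ℂ) (x : X) :
    (effect K x * ρ).trace = ∑ i, (K i * ρ * (K i)ᴴ) x x := by
  simp only [effect, Finset.sum_mul, Matrix.trace_sum, Matrix.vecMulVec_mul,
    Matrix.trace_vecMulVec]
  refine Finset.sum_congr rfl fun i _ => ?_
  rw [dotProduct_comm]
  rfl

variable {Z : Type*}

theorem sum_conjTranspose_mul_submatrix [Fintype X] [DecidableEq D] [DecidableEq Z]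
    {K : I → Matrix X D ℂ} (hK : ∑ i, (K i)ᴴ * K i = 1) {f : Z → D} (hf : f.Injective) :
    ∑ i, ((K i).submatrix id f)ᴴ * (K i).submatrix id f = 1 := by
  rw [← Matrix.submatrix_one f hf, ← hK]
  ext k l
  simp only [Matrix.sum_apply, Matrix.submatrix_apply]
  rfl

theorem mul_mul_conjTranspose_eq_submatrix [Fintype D] [Fintype Z] {f : Z → D} (hf : f.Injective)
    {ρ : Matrix D D ℂ} (hρ : ∀ s s', ρ s s' ≠ 0 → s ∈ Set.range f ∧ s' ∈ Set.range f)
    (K : Matrix X D ℂ) :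
    K * ρ * Kᴴ = K.submatrix id f * ρ.submatrix f f * (K.submatrix id f)ᴴ := by
  ext x y
  simp only [Matrix.mul_apply, Finset.sum_mul, Matrix.conjTranspose_apply, Matrix.submatrix_apply,
    id_eq, ← Fintype.sum_prod_type']
  refine (Fintype.sum_of_injective (Prod.map f f) (hf.prodMap hf) _ _ ?_ fun _ => rfl).symm
  rintro ⟨s', s⟩ hs
  have apply_eq_zero : ρ s s' = 0 := by
    by_contra h
    obtain ⟨⟨k, rfl⟩, ⟨k', rfl⟩⟩ := hρ s s' h
    exact hs ⟨(k', k), rfl⟩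
  simp [apply_eq_zero]

theorem trace_mul_sum_mul_mul_conjTranspose {S B : Type*} [Fintype S] [Fintype B] (M : Matrix B B ℂ)
    (N : Matrix S S ℂ) (K : I → Matrix B S ℂ) :
    (M * ∑ i, K i * N * (K i)ᴴ).trace =
      ∑ i, star (K i).vec ⬝ᵥ ((Nᵀ ⊗ₖ M) *ᵥ (K i).vec) := by
  simp only [Matrix.kronecker_mulVec_vec, Matrix.star_vec_dotProduct_vec,
    Matrix.transpose_transpose, Finset.mul_sum, Matrix.trace_sum]
  refine Finset.sum_congr rfl fun i _ => ?_
  rw [Matrix.trace_mul_comm (K i)ᴴ]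
  simp only [Matrix.mul_assoc]

theorem sum_star_vec_dotProduct_vec {S B : Type*} [Fintype S] [Fintype B] [DecidableEq S]
    {K : I → Matrix B S ℂ} (hK : ∑ i, (K i)ᴴ * K i = 1) :
    ∑ i, star (K i).vec ⬝ᵥ (K i).vec = Fintype.card S := by
  simp only [Matrix.star_vec_dotProduct_vec, ← Matrix.trace_sum, hK, Matrix.trace_one]

end Kraus

section RankOne

variable {X S : Type*} [Fintype S]

theorem vecMulVec_star_mul_mul_self (u v : S → ℂ) :
    Matrix.vecMulVec u (star u) * Matrix.vecMulVec v (star v) * Matrix.vecMulVec u (star u) =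
      ((star u ⬝ᵥ v) * star (star u ⬝ᵥ v)) • Matrix.vecMulVec u (star u) := by
  have star_eq : star (star u ⬝ᵥ v) = star v ⬝ᵥ u := by
    rw [Matrix.star_dotProduct, star_star, dotProduct_comm]
  simp only [Matrix.vecMulVec_mul_vecMulVec, smul_mul_assoc, smul_smul, star_eq,
    Matrix.vecMulVec_smul]

theorem isPVM_vecMulVec_star [Fintype X] [DecidableEq X] [DecidableEq S]
    (hcard : Fintype.card X = Fintype.card S) {w : X → S → ℂ}
    (hw : ∀ x y, star (w x) ⬝ᵥ w y = if x = y then 1 else 0) :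
    IsPVM fun x => Matrix.vecMulVec (w x) (star (w x)) := by
  have ortho : (Matrix.of w).map star * (Matrix.of w)ᵀ = 1 := by
    ext x y
    rw [Matrix.one_apply, ← hw x y]
    rfl
  have complete : ∑ x, Matrix.vecMulVec (w x) (star (w x)) = 1 := by
    rw [← (Matrix.mul_eq_one_comm_of_card_eq _ _ _ hcard).1 ortho]
    ext s s'
    simp only [Matrix.sum_apply]
    rfl
  refine ⟨CompleteOrthogonalIdempotents.iff_ortho_complete.2 ⟨fun x y hxy => ?_, complete⟩,
    fun x => ?_⟩
  · simp only [Matrix.vecMulVec_mul_vecMulVec, hw, if_neg hxy, zero_smul, Matrix.vecMulVec_zero]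
  · rw [IsSelfAdjoint, Matrix.star_eq_conjTranspose, Matrix.conjTranspose_vecMulVec, star_star]

end RankOne

section Wiesner

variable {n : ℕ}

theorem star_qAmp (x θ s : Bool) : star (qAmp x θ s) = qAmp x θ s := by
  simp only [qAmp, apply_ite star, star_mul', star_neg, star_one, star_zero, Complex.star_def,
    Complex.conj_ofReal]

theorem star_wiesnerVec (x θ : Fin n → Bool) : star (wiesnerVec x θ) = wiesnerVec x θ := by
  ext s
  simp only [Pi.star_apply, wiesnerVec, star_prod, star_qAmp]

theorem wiesnerDM_eq_vecMulVec (x θ : Fin n → Bool) :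
    wiesnerDM x θ = Matrix.vecMulVec (wiesnerVec x θ) (star (wiesnerVec x θ)) :=
  rfl

theorem transpose_wiesnerDM (x θ : Fin n → Bool) : (wiesnerDM x θ)ᵀ = wiesnerDM x θ := by
  rw [wiesnerDM_eq_vecMulVec, Matrix.transpose_vecMulVec, star_wiesnerVec]

theorem star_wiesnerVec_dotProduct (x y θ θ' : Fin n → Bool) :
    star (wiesnerVec x θ) ⬝ᵥ wiesnerVec y θ' =
      ∏ i, ∑ s, qAmp (x i) (θ i) s * qAmp (y i) (θ' i) s := by
  rw [Fintype.prod_sum, star_wiesnerVec]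
  exact Finset.sum_congr rfl fun s _ => Finset.prod_mul_distrib.symm

theorem ofReal_inv_sqrt_two_mul_self :
    ((1 / √2 : ℝ) : ℂ) * ((1 / √2 : ℝ) : ℂ) = 1 / 2 := by
  rw [← Complex.ofReal_mul, div_mul_div_comm, Real.mul_self_sqrt zero_le_two]
  norm_num

theorem sum_qAmp_mul_qAmp_self (θ x y : Bool) :
    ∑ s, qAmp x θ s * qAmp y θ s = if x = y then 1 else 0 := by
  have half := ofReal_inv_sqrt_two_mul_self
  cases θ <;> cases x <;> cases y <;> simp [qAmp] at half ⊢ <;> linear_combination 2 * half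

/-- The largest overlap of a vector of the qubit basis labelled `a` with one of the basis
labelled `b`. -/
noncomputable def basisOverlap (a b : Bool) : ℝ :=
  if a = b then 1 else 1 / √2

theorem basisOverlap_nonneg (a b : Bool) : 0 ≤ basisOverlap a b := by
  unfold basisOverlap
  positivity

theorem norm_sum_qAmp_mul_qAmp_le (θ θ' x y : Bool) :
    ‖∑ s, qAmp x θ s * qAmp y θ' s‖ ≤ basisOverlap θ θ' := by
  by_cases hθ : θ = θ'
  · subst hθ
    rw [sum_qAmp_mul_qAmp_self, basisOverlap, if_pos rfl]
    split_ifs <;> simp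
  · rw [basisOverlap, if_neg hθ]
    cases θ <;> cases θ' <;> cases x <;> cases y <;> simp [qAmp, abs_of_nonneg] at hθ ⊢

theorem isPVM_wiesnerDM (θ : Fin n → Bool) : IsPVM fun x => wiesnerDM x θ :=
  isPVM_vecMulVec_star rfl fun x y => by
    simp only [star_wiesnerVec_dotProduct, sum_qAmp_mul_qAmp_self, Finset.prod_ite_zero,
      Finset.prod_const_one, Finset.mem_univ, true_imp_iff, funext_iff]

theorem norm_star_wiesnerVec_dotProduct_le (x y θ θ' : Fin n → Bool) :
    ‖star (wiesnerVec x θ) ⬝ᵥ wiesnerVec y θ'‖ ≤ ∏ i, basisOverlap (θ i) (θ' i) := by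
  rw [star_wiesnerVec_dotProduct, norm_prod]
  exact Finset.prod_le_prod (fun _ _ => norm_nonneg _) fun i _ =>
    norm_sum_qAmp_mul_qAmp_le _ _ _ _

theorem sum_basisOverlap (a : Bool) : ∑ b, basisOverlap a b = 1 + 1 / √2 := by
  cases a <;> simp [basisOverlap, add_comm]

theorem sum_sum_prod_basisOverlap (n : ℕ) :
    ∑ θ : Fin n → Bool, ∑ θ' : Fin n → Bool, ∏ i, basisOverlap (θ i) (θ' i) = (2 + √2) ^ n := by
  have two_mul_eq : 2 * (1 + 1 / √2) = 2 + √2 := by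
    field_simp
    linear_combination -Real.mul_self_sqrt (zero_le_two (α := ℝ))
  simp only [← Fintype.prod_sum, sum_basisOverlap, Finset.prod_const, Finset.sum_const,
    Finset.card_univ, Fintype.card_fin, Fintype.card_fun, Fintype.card_bool, nsmul_eq_mul,
    Nat.cast_pow, Nat.cast_ofNat, ← mul_pow, two_mul_eq]

end Wiesner

section BitStrings

variable {α : Type*} {n p q m : ℕ} (a : Fin n → α) (k : Fin p → α) (l : Fin q → α) (b : Fin m → α)

theorem append_eq_dite :
    Fin.append a k =
      fun i : Fin (n + p) => if h : i.val < n then a ⟨i, h⟩ else k ⟨i - n, by omega⟩ := by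
  funext i
  refine Fin.addCases (fun j => ?_) (fun j => ?_) i <;> simp

theorem append_slice_left :
    (fun i : Fin n => Fin.append a k ⟨i, by omega⟩) = a :=
  funext fun i => Fin.append_left a k i

theorem append_slice_right :
    (fun i : Fin p => Fin.append a k ⟨n + i, by omega⟩) = k :=
  funext fun i => Fin.append_right a k i

theorem append_append_slice_first :
    (fun i : Fin n => Fin.append (Fin.append a k) (Fin.append l b) ⟨i, by omega⟩) = a :=
  funext fun i => (Fin.append_left _ _ (Fin.castAdd p i)).trans (Fin.append_left a k i)

theorem append_append_slice_middle :
    (fun i : Fin (p + q) => Fin.append (Fin.append a k) (Fin.append l b) ⟨n + i, by omega⟩) =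
      Fin.append k l := by
  funext i
  refine Fin.addCases (fun j => ?_) (fun j => ?_) i
  · rw [Fin.append_left, ← Fin.append_right a k j]
    exact Fin.append_left _ _ (Fin.natAdd n j)
  · rw [Fin.append_right, ← Fin.append_left l b j,
      ← Fin.append_right (Fin.append a k) (Fin.append l b)]
    exact congrArg _ (Fin.ext (Nat.add_assoc n p j).symm)

theorem append_append_slice_last :
    (fun i : Fin m => Fin.append (Fin.append a k) (Fin.append l b) ⟨n + p + q + i, by omega⟩) =
      b := by
  funext i
  have index_eq : (⟨n + p + q + i, by omega⟩ : Fin (n + p + (q + m))) =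
      Fin.natAdd (n + p) (Fin.natAdd q i) :=
    Fin.ext (Nat.add_assoc (n + p) q i)
  rw [index_eq, Fin.append_right, Fin.append_right]

theorem append_eq_append_iff {a a' : Fin n → α} {k k' : Fin p → α} :
    Fin.append a k = Fin.append a' k' ↔ a = a' ∧ k = k' :=
  ((Fin.appendEquiv n p).injective.eq_iff (a := (a, k)) (b := (a', k'))).trans Prod.mk_inj

theorem append_append_injective :
    (fun s : (Fin p → α) × (Fin q → α) =>
      Fin.append (Fin.append a s.1) (Fin.append s.2 b)).Injective := by
  rintro ⟨k, l⟩ ⟨k', l'⟩ h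
  simpa only [append_eq_append_iff, true_and, and_true, Prod.mk_inj] using h

theorem exists_eq_append_append (s : Fin (n + p + (q + m)) → α) :
    ∃ (a : Fin n → α) (k : Fin p → α) (l : Fin q → α) (b : Fin m → α),
      s = Fin.append (Fin.append a k) (Fin.append l b) := by
  obtain ⟨⟨u, v⟩, rfl⟩ := (Fin.appendEquiv (n + p) (q + m)).surjective s
  obtain ⟨⟨a, k⟩, rfl⟩ := (Fin.appendEquiv n p).surjective u
  obtain ⟨⟨l, b⟩, rfl⟩ := (Fin.appendEquiv q m).surjective v
  exact ⟨a, k, l, b, rfl⟩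

end BitStrings

theorem sqrt_pow {a : ℝ} (ha : 0 ≤ a) (n : ℕ) : √(a ^ n) = √a ^ n := by
  simpa using Real.sqrt_prod (Finset.range n) (x := fun _ => a) fun _ _ => ha

section MoeProb

open scoped Kronecker ComplexOrder MatrixOrder

variable {n aB aC mA mB mC : ℕ}
  (KA : Fin mA → Matrix (Fin (aB + aC) → Bool) (Fin n → Bool) ℂ)
  (KB : Fin mB → Matrix (Fin n → Bool) (Fin (n + aB) → Bool) ℂ)
  (KC : Fin mC → Matrix (Fin n → Bool) (Fin (aC + n) → Bool) ℂ)

/-- The Kraus family `KA` with its output register split into the shares of the two players. -/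
def splitOutput (i : Fin mA) : Matrix ((Fin aB → Bool) × (Fin aC → Bool)) (Fin n → Bool) ℂ :=
  (KA i).submatrix (Fin.appendEquiv aB aC) id

/-- The POVM on the first player's share given by the channel `KB` with `θ` as its other input. -/
def leftEffect (θ : Fin n → Bool) : (Fin n → Bool) → Matrix (Fin aB → Bool) (Fin aB → Bool) ℂ :=
  effect fun i => (KB i).submatrix id fun k => Fin.append θ k

/-- The POVM on the second player's share given by the channel `KC` with `θ` as its other input. -/
def rightEffect (θ : Fin n → Bool) : (Fin n → Bool) → Matrix (Fin aC → Bool) (Fin aC → Bool) ℂ :=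
  effect fun i => (KC i).submatrix id fun k => Fin.append k θ

theorem moeProb_eq_re_trace (x θ : Fin n → Bool) :
    moeProb KA KB KC x θ = ((leftEffect KB θ x ⊗ₖ rightEffect KC θ x) *
      ∑ i, splitOutput KA i * wiesnerDM x θ * (splitOutput KA i)ᴴ).trace.re := by
  unfold moeProb
  extract_lets σ ρ KBC τ xx
  let ι (k : (Fin aB → Bool) × (Fin aC → Bool)) : Fin (n + aB + (aC + n)) → Bool :=
    Fin.append (Fin.append θ k.1) (Fin.append k.2 θ)
  have xx_eq : xx = Fin.append x x := (append_eq_dite x x).symm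
  have ρ_support (s s') (h : ρ s s' ≠ 0) : s ∈ Set.range ι ∧ s' ∈ Set.range ι := by
    obtain ⟨a, k, l, b, rfl⟩ := exists_eq_append_append s
    obtain ⟨a', k', l', b', rfl⟩ := exists_eq_append_append s'
    simp only [ρ, append_append_slice_first, append_append_slice_last, ne_eq, mul_eq_zero,
      ite_eq_right_iff, one_ne_zero, imp_false, not_or, not_not] at h
    obtain ⟨⟨⟨⟨rfl, rfl⟩, -⟩, rfl⟩, rfl⟩ := h
    exact ⟨⟨(k, l), rfl⟩, ⟨(k', l'), rfl⟩⟩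
  have ρ_submatrix : ρ.submatrix ι ι =
      ∑ i, splitOutput KA i * wiesnerDM x θ * (splitOutput KA i)ᴴ := by
    ext k k'
    rw [Matrix.submatrix_apply]
    simp only [ρ, ι, append_append_slice_first, append_append_slice_middle,
      append_append_slice_last, if_true, one_mul, mul_one, σ, Matrix.sum_apply]
    rfl
  have KBC_row (p : Fin mB × Fin mC) : (KBC p).submatrix id ι xx =
      ((KB p.1).submatrix id (fun k => Fin.append θ k) ⊗ₖ
        (KC p.2).submatrix id fun k => Fin.append k θ) (x, x) := by
    ext k
    rw [Matrix.submatrix_apply]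
    simp only [KBC, ι, xx_eq, append_slice_left, append_slice_right,
      Matrix.kroneckerMap_apply, Matrix.submatrix_apply, id_eq]
  have effect_eq : effect (fun p => (KBC p).submatrix id ι) xx =
      leftEffect KB θ x ⊗ₖ rightEffect KC θ x := by
    rw [leftEffect, rightEffect, ← effect_kronecker]
    simp only [effect, KBC_row]
  simp only [τ, Matrix.sum_apply,
    mul_mul_conjTranspose_eq_submatrix (append_append_injective θ θ) ρ_support]
  rw [← trace_effect_mul, effect_eq, ρ_submatrix]

theorem moeProb_eq_sum_re_dotProduct (x θ : Fin n → Bool) :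
    moeProb KA KB KC x θ = ∑ i, (star (splitOutput KA i).vec ⬝ᵥ
      ((wiesnerDM x θ ⊗ₖ (leftEffect KB θ x ⊗ₖ rightEffect KC θ x)) *ᵥ
        (splitOutput KA i).vec)).re := by
  rw [moeProb_eq_re_trace, trace_mul_sum_mul_mul_conjTranspose, transpose_wiesnerDM,
    Complex.re_sum]

theorem moeProb_nonneg (x θ : Fin n → Bool) : 0 ≤ moeProb KA KB KC x θ := by
  rw [moeProb_eq_sum_re_dotProduct]
  have posSemidef : (wiesnerDM x θ ⊗ₖ (leftEffect KB θ x ⊗ₖ rightEffect KC θ x)).PosSemidef :=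
    (Matrix.posSemidef_vecMulVec_self_star _).kronecker
      ((posSemidef_effect _ _).kronecker (posSemidef_effect _ _))
  exact Finset.sum_nonneg fun i _ => posSemidef.re_dotProduct_nonneg _

variable {KA KB KC}

theorem sum_conjTranspose_mul_splitOutput (hKA : ∑ i, (KA i)ᴴ * KA i = 1) :
    ∑ i, (splitOutput KA i)ᴴ * splitOutput KA i = 1 := by
  rw [← hKA]
  refine Finset.sum_congr rfl fun i _ => ?_
  rw [splitOutput, Matrix.conjTranspose_submatrix, Matrix.submatrix_mul_equiv,
    Matrix.submatrix_id_id]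

theorem isPOVM_leftEffect (hKB : ∑ i, (KB i)ᴴ * KB i = 1) (θ : Fin n → Bool) :
    IsPOVM (leftEffect KB θ) :=
  isPOVM_effect <| sum_conjTranspose_mul_submatrix hKB fun _ _ h => (append_eq_append_iff.1 h).2

theorem isPOVM_rightEffect (hKC : ∑ i, (KC i)ᴴ * KC i = 1) (θ : Fin n → Bool) :
    IsPOVM (rightEffect KC θ) :=
  isPOVM_effect <| sum_conjTranspose_mul_submatrix hKC fun _ _ h => (append_eq_append_iff.1 h).1

theorem sum_moeProb_le (hKA : ∑ i, (KA i)ᴴ * KA i = 1) (hKB : ∑ i, (KB i)ᴴ * KB i = 1)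
    (hKC : ∑ i, (KC i)ᴴ * KC i = 1) :
    ∑ θ, ∑ x, moeProb KA KB KC x θ ≤ 2 ^ n * 2 ^ n * (√(2 + √2) / 2) ^ n := by
  let vA (i : Fin mA) := (splitOutput KA i).vec
  have bound (i : Fin mA) : ∑ θ, ∑ x, (star (vA i) ⬝ᵥ
      ((wiesnerDM x θ ⊗ₖ (leftEffect KB θ x ⊗ₖ rightEffect KC θ x)) *ᵥ vA i)).re ≤
      √((2 + √2) ^ n) * (star (vA i) ⬝ᵥ vA i).re :=
    sum_sum_prod_basisOverlap n ▸ sum_sum_re_star_dotProduct_kronecker_mulVec_le isPVM_wiesnerDM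
      (isPOVM_leftEffect hKB) (isPOVM_rightEffect hKC)
      (fun θ θ' x y => vecMulVec_star_mul_mul_self (wiesnerVec x θ) (wiesnerVec y θ'))
      (fun θ θ' => Finset.prod_nonneg fun i _ => basisOverlap_nonneg _ _)
      (fun θ θ' x y => norm_star_wiesnerVec_dotProduct_le x y θ θ') (vA i)
  have sum_norm_sq : ∑ i, (star (vA i) ⬝ᵥ vA i).re = 2 ^ n := by
    rw [← Complex.re_sum, sum_star_vec_dotProduct_vec (sum_conjTranspose_mul_splitOutput hKA),
      Complex.natCast_re]
    simp
  calc ∑ θ, ∑ x, moeProb KA KB KC x θ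
      = ∑ i, ∑ θ, ∑ x, (star (vA i) ⬝ᵥ
          ((wiesnerDM x θ ⊗ₖ (leftEffect KB θ x ⊗ₖ rightEffect KC θ x)) *ᵥ vA i)).re := by
        simp only [moeProb_eq_sum_re_dotProduct, Finset.sum_comm (γ := Fin mA), vA]
    _ ≤ ∑ i, √((2 + √2) ^ n) * (star (vA i) ⬝ᵥ vA i).re := Finset.sum_le_sum fun i _ => bound i
    _ = √(2 + √2) ^ n * 2 ^ n := by
        rw [← Finset.mul_sum, sum_norm_sq, sqrt_pow (by positivity)]
    _ = 2 ^ n * 2 ^ n * (√(2 + √2) / 2) ^ n := by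
        rw [div_pow]
        field_simp

end MoeProb

theorem sqrt_two_add_sqrt_two_div_two_lt_one : √(2 + √2) / 2 < 1 := by
  rw [div_lt_one two_pos, Real.sqrt_lt' two_pos]
  have sqrt_two_lt_two : √2 < 2 := by
    rw [Real.sqrt_lt' two_pos]
    norm_num
  linarith

/-- the derandomized monogamy-of-entanglement lemma: for any
countable family of triples of channels `(A t, B t, C t)` (given by Kraus
families, with size functions `b t` and `c t`), there is a single fixed sequence
of Wiesner states `|x_lam^{θ_lam}⟩` such that every member of the family wins the
monogamy game on this fixed sequence with only negligible probability. -/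
theorem derandomized_moe (b c mA mB mC : ℕ → ℕ → ℕ)
    (KA : ∀ t lam : ℕ,
      Fin (mA t lam) → Matrix (Fin (b t lam + c t lam) → Bool) (Fin lam → Bool) ℂ)
    (KB : ∀ t lam : ℕ,
      Fin (mB t lam) → Matrix (Fin lam → Bool) (Fin (lam + b t lam) → Bool) ℂ)
    (KC : ∀ t lam : ℕ,
      Fin (mC t lam) → Matrix (Fin lam → Bool) (Fin (c t lam + lam) → Bool) ℂ)
    (hKA : ∀ t lam, ∑ i, (KA t lam i)ᴴ * KA t lam i = 1)
    (hKB : ∀ t lam, ∑ i, (KB t lam i)ᴴ * KB t lam i = 1)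
    (hKC : ∀ t lam, ∑ i, (KC t lam i)ᴴ * KC t lam i = 1) :
    ∃ x θ : ∀ lam : ℕ, Fin lam → Bool, ∀ t : ℕ,
      Negligible (fun lam => moeProb (KA t lam) (KB t lam) (KC t lam) (x lam) (θ lam)) := by
  let Z (n : ℕ) := (Fin n → Bool) × (Fin n → Bool)
  have sum_le (t n : ℕ) : ∑ z : Z n, moeProb (KA t n) (KB t n) (KC t n) z.2 z.1 ≤
      Fintype.card (Z n) * (√(2 + √2) / 2) ^ n := by
    rw [Fintype.sum_prod_type]
    simpa [Z] using sum_moeProb_le (hKA t n) (hKB t n) (hKC t n)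
  obtain ⟨z, hz⟩ := exists_forall_negligible_of_sum_le
    (fun t n (z : Z n) => moeProb_nonneg (KA t n) (KB t n) (KC t n) z.2 z.1)
    (negligible_pow (by positivity) sqrt_two_add_sqrt_two_div_two_lt_one) sum_le
  exact ⟨fun n => (z n).2, fun n => (z n).1, hz⟩
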